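/- The set of affine rational points of the hyperelliptic curve C : y² = x⁸ + 4x⁷ + 6x⁶ + 4x⁵ − 7x⁴ − 16x³ + 8x is exactly {(−2, 0), (−1, 0), (0, 0), (1, 0)}: for x, y ∈ ℚ, y² = x⁸ + 4x⁷ + 6x⁶ + 4x⁵ − 7x⁴ − 16x³ + 8x holds if and only if (x, y) is one of these four pairs. -/

import Mathlib

/-!
The right-hand side is `q (q - 2) (q² + 2q - 4)` with `q = x² + x`, and for `q ≠ 0` the substitution
`z = 2 / q - 1` leads to the elliptic curve `E : w² = z (z² + z - 1)`. Comparing prime factors, a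
rational point of `E` with `z ≠ 0` has `z = t²` or `z = -t⁻²`, where `t = r / e` in lowest terms and
`r⁴ + r² e² - e⁴ = s²`. If `e ≠ 0`, the factorisation `(2r² + e² - 2s) (2r² + e² + 2s) = 5e⁴` turns
`(r, e)` into a primitive Pythagorean triple, whose parametrisation yields a coprime pair `(u, v)`
with `u⁴ + u² v² - v⁴ = a²` and `(r : e) = (u⁴ + v⁴ : 2auv)` up to sign: this halves the point on
`E`. Since `v` is smaller than `e` unless `r² = e² = 1`, infinite descent gives `z ∈ {0, 1, -1}`.
Of the corresponding values `q = 2, 1, ∞`, the second is excluded because `5` is not a square.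
-/

theorem isCoprime_of_mul_eq_squarefree_mul_pow {R : Type*} [CommRing R] [IsBezout R]
    {a b c m : R} {n : ℕ} (hm : Squarefree m) (hc : IsCoprime (a + b) c)
    (h : a * b = m * c ^ n) : IsCoprime a b := by
  refine isRelPrime_iff_isCoprime.mp fun d hda hdb ↦ hm d ?_
  have hdc : IsCoprime d c := hc.of_isCoprime_of_dvd_left (dvd_add hda hdb)
  exact (hdc.mul_left hdc).pow_right.dvd_of_dvd_mul_right (h ▸ mul_dvd_mul hda hdb)

theorem exists_eq_pow_of_isCoprime_of_mul_eq_pow {a b c : ℤ} {n : ℕ} (hab : IsCoprime a b)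
    (ha : 0 ≤ a) (h : a * b = c ^ n) : ∃ d : ℤ, a = d ^ n := by
  obtain ⟨d, hd⟩ := exists_associated_pow_of_mul_eq_pow' hab h
  refine ⟨|d|, ?_⟩
  rw [← abs_pow, Int.abs_eq_natAbs, Int.associated_iff_natAbs.mp hd, Int.natAbs_of_nonneg ha]

theorem exists_eq_pow_and_eq_pow_of_mul_eq_pow {a b c : ℤ} {n : ℕ} (hn : n ≠ 0)
    (hab : IsCoprime a b) (ha : 0 ≤ a) (hb : 0 ≤ b) (h : a * b = c ^ n) :
    ∃ d e : ℤ, IsCoprime d e ∧ a = d ^ n ∧ b = e ^ n := by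
  obtain ⟨d, rfl⟩ := exists_eq_pow_of_isCoprime_of_mul_eq_pow hab ha h
  obtain ⟨e, rfl⟩ := exists_eq_pow_of_isCoprime_of_mul_eq_pow hab.symm hb
    (mul_comm (d ^ n) b ▸ h)
  exact ⟨d, e, (IsCoprime.pow_iff hn.bot_lt hn.bot_lt).mp hab, rfl, rfl⟩

theorem exists_add_eq_pow_add_mul_pow {a b c p : ℤ} {n : ℕ} (hp : Prime p) (hp0 : 0 < p)
    (hn : n ≠ 0) (hab : IsCoprime a b) (ha : 0 ≤ a) (hb : 0 ≤ b) (h : a * b = p * c ^ n) :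
    ∃ d e : ℤ, IsCoprime d e ∧ (d * e) ^ 2 = c ^ 2 ∧ a + b = d ^ n + p * e ^ n := by
  wlog hpb : p ∣ b generalizing a b
  · have hpa : p ∣ a := (hp.dvd_or_dvd ⟨_, h⟩).resolve_right hpb
    simpa only [add_comm b a] using this hab.symm hb ha (mul_comm a b ▸ h) hpa
  obtain ⟨b', rfl⟩ := hpb
  have h' : a * b' = c ^ n := mul_left_cancel₀ hp.ne_zero (by rw [← h]; ring)
  obtain ⟨d, e, hde, rfl, rfl⟩ := exists_eq_pow_and_eq_pow_of_mul_eq_pow hn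
    hab.of_mul_right_right ha (nonneg_of_mul_nonneg_right hb hp0) h'
  refine ⟨d, e, hde, sq_eq_sq_iff_abs_eq_abs _ _ |>.mpr ?_, rfl⟩
  rw [← pow_left_inj₀ (abs_nonneg _) (abs_nonneg _) hn, ← abs_pow, ← abs_pow, mul_pow, h']

theorem nonneg_and_nonneg_of_mul_nonneg_of_add_nonneg {R : Type*} [CommRing R] [LinearOrder R]
    [IsStrictOrderedRing R] {a b : R} (hmul : 0 ≤ a * b) (hadd : 0 ≤ a + b) : 0 ≤ a ∧ 0 ≤ b := by
  rcases mul_nonneg_iff.mp hmul with h | ⟨ha, hb⟩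
  · exact h
  · constructor <;> linarith

theorem exists_eq_pow_add_mul_pow_of_even {a b c σ p : ℤ} {n : ℕ} (hp : Prime p) (hp0 : 0 < p)
    (hn : n ≠ 0) (hn_even : Even n) (hadd : a + b = σ) (hmul : a * b = p * c ^ n) (hσ : 0 ≤ σ)
    (hc : IsCoprime σ c) :
    ∃ d e : ℤ, IsCoprime d e ∧ (d * e) ^ 2 = c ^ 2 ∧ σ = d ^ n + p * e ^ n := by
  subst hadd
  obtain ⟨ha, hb⟩ := nonneg_and_nonneg_of_mul_nonneg_of_add_nonneg
    (hmul ▸ mul_nonneg hp0.le (hn_even.pow_nonneg c)) hσ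
  exact exists_add_eq_pow_add_mul_pow hp hp0 hn
    (isCoprime_of_mul_eq_squarefree_mul_pow hp.squarefree hc hmul) ha hb hmul

theorem exists_pow_four_sub_pow_four_of_pythagoreanTriple_two_mul_sq {x b z : ℤ}
    (h : PythagoreanTriple x (2 * b ^ 2) z) (hx : IsCoprime x (2 * b ^ 2)) (hb : b ≠ 0)
    (hz : 0 < z) :
    ∃ u v : ℤ, IsCoprime u v ∧ Odd (u + v) ∧ (u * v) ^ 2 = b ^ 2 ∧ x = u ^ 4 - v ^ 4 := by
  have hx_odd : Odd x := Int.isCoprime_two_right.mp hx.of_mul_right_left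
  obtain ⟨p, q, rfl, hpq, -, hcop, hparity, hp⟩ := h.coprime_classification'
    (Int.isCoprime_iff_gcd_eq_one.mp hx) (Int.odd_iff.mp hx_odd) hz
  have hmul : p * q = b ^ 2 := by linarith
  have hmul_pos : 0 < p * q := hmul ▸ by positivity
  obtain ⟨u, v, huv, rfl, rfl⟩ := exists_eq_pow_and_eq_pow_of_mul_eq_pow two_ne_zero
    (Int.isCoprime_iff_gcd_eq_one.mpr hcop) hp (pos_of_mul_pos_right hmul_pos hp).le hmul
  have hsum : Odd (u ^ 2 + v ^ 2) := by rw [Int.odd_iff]; lia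
  refine ⟨u, v, huv, ?_, by rw [mul_pow, hmul], by ring⟩
  simpa [parity_simps] using hsum

theorem exists_pow_four_sub_pow_four_of_pythagoreanTriple_sq {b y z : ℤ}
    (h : PythagoreanTriple (b ^ 2) y z) (hb : IsCoprime (b ^ 2) y) (hb_odd : Odd b) (hz : 0 < z) :
    ∃ u v : ℤ, IsCoprime u v ∧ (u * v) ^ 2 = b ^ 2 ∧ 2 * y = u ^ 4 - v ^ 4 ∧
      2 * z = u ^ 4 + v ^ 4 := by
  obtain ⟨p, q, hpq, rfl, rfl, hcop, hparity, hp⟩ := h.coprime_classification'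
    (Int.isCoprime_iff_gcd_eq_one.mp hb) (Int.odd_iff.mp hb_odd.pow) hz
  have hmul : (p + q) * (p - q) = b ^ 2 := by rw [hpq]; ring
  have hcop' : IsCoprime (p + q) (p - q) := by
    have hpq_odd : Odd (p + q) := by rw [Int.odd_iff]; lia
    have hcop_p : IsCoprime (p + q) p := by
      simpa [add_comm] using (Int.isCoprime_iff_gcd_eq_one.mpr hcop).symm.add_mul_left_left 1
    have := ((Int.isCoprime_two_right.mpr hpq_odd).mul_right hcop_p).add_mul_left_right (-1)
    rwa [show 2 * p + (p + q) * -1 = p - q by ring] at this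
  obtain ⟨hadd, hsub⟩ := nonneg_and_nonneg_of_mul_nonneg_of_add_nonneg
    (hmul ▸ sq_nonneg b) (show 0 ≤ p + q + (p - q) by linarith)
  obtain ⟨u, v, huv, hu, hv⟩ :=
    exists_eq_pow_and_eq_pow_of_mul_eq_pow two_ne_zero hcop' hadd hsub hmul
  refine ⟨u, v, huv, by rw [mul_pow, ← hu, ← hv, hmul], ?_, ?_⟩
  · linear_combination (p + q + u ^ 2) * hu - (p - q + v ^ 2) * hv
  · linear_combination (p + q + u ^ 2) * hu + (p - q + v ^ 2) * hv

theorem natAbs_lt_natAbs_or_isUnit {c v e : ℤ} (he : e ≠ 0) (h : e ^ 2 = (c * v) ^ 2) :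
    v.natAbs < e.natAbs ∨ IsUnit c := by
  have hmul : e.natAbs = c.natAbs * v.natAbs := by
    rw [← Int.natAbs_mul, Int.natAbs_eq_iff_sq_eq.mpr h]
  obtain ⟨hc, hv⟩ : 0 < c.natAbs ∧ 0 < v.natAbs := by
    rw [← CanonicallyOrderedAdd.mul_pos, ← hmul]
    exact Int.natAbs_pos.mpr he
  rcases (Nat.one_le_iff_ne_zero.mpr hc.ne').eq_or_lt with hone | hlt
  · exact .inr (Int.isUnit_iff_natAbs_eq.mpr hone.symm)
  · exact .inl (hmul ▸ lt_mul_of_one_lt_left hv hlt)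

/-- The pair `(r, e)` represents in lowest terms a rational point `t = r / e` (at infinity if
`e = 0`) of the 2-covering `η² = t⁴ + t² - 1` of the elliptic curve `w² = z (z² + z - 1)`,
given by `z = t²`, with `η = s / e²`. -/
structure IsPrimitiveCoveringPoint (r e s : ℤ) : Prop where
  isCoprime : IsCoprime r e
  sq_eq : s ^ 2 = r ^ 4 + r ^ 2 * e ^ 2 - e ^ 4

namespace IsPrimitiveCoveringPoint

variable {r e s : ℤ}

theorem left_ne_zero (h : IsPrimitiveCoveringPoint r e s) : r ≠ 0 := by
  rintro rfl
  have he : e ≠ 0 := (isCoprime_zero_left.mp h.isCoprime).ne_zero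
  have he_pos : 0 < e ^ 4 := by positivity
  linarith [h.sq_eq, sq_nonneg s]

theorem exists_four_mul_sq_eq_of_odd (h : IsPrimitiveCoveringPoint r e s) (he : Odd e) :
    ∃ a b : ℤ, IsCoprime a b ∧ e ^ 2 = (a * b) ^ 2 ∧
      4 * r ^ 2 = (a ^ 2 - b ^ 2) ^ 2 + (2 * b ^ 2) ^ 2 := by
  have hcop : IsCoprime (4 * r ^ 2 + 2 * e ^ 2) e := by
    have h4 : IsCoprime (4 : ℤ) e := (Int.isCoprime_two_left.mpr he).pow_left (m := 2)
    simpa only [sq e, mul_left_comm 2 e e] using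
      (h4.mul_left (h.isCoprime.pow_left (m := 2))).add_mul_left_left (2 * e)
  obtain ⟨a, b, hab, hab_sq, hsum⟩ := exists_eq_pow_add_mul_pow_of_even (p := 5) (n := 4)
    (a := 2 * r ^ 2 + e ^ 2 - 2 * s) (b := 2 * r ^ 2 + e ^ 2 + 2 * s)
    (by norm_num) (by norm_num) (by norm_num) (by decide) (by ring)
    (by linear_combination (-4) * h.sq_eq) (by positivity) hcop
  exact ⟨a, b, hab, hab_sq.symm, by linear_combination hsum + 2 * hab_sq⟩

theorem exists_sq_eq_of_even (h : IsPrimitiveCoveringPoint r e s) (he : Even e) :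
    ∃ a b : ℤ, IsCoprime a b ∧ e ^ 2 = (2 * a * b) ^ 2 ∧
      r ^ 2 = (a ^ 2 - b ^ 2) ^ 2 + (2 * b ^ 2) ^ 2 := by
  obtain ⟨k, rfl⟩ := he.two_dvd
  obtain ⟨t, ht⟩ : ∃ t, r ^ 2 - s = 2 * t := by
    have hs : Even (s ^ 2 - r ^ 4) := ⟨2 * k ^ 2 * (r ^ 2 - 4 * k ^ 2), by rw [h.sq_eq]; ring⟩
    exact Even.two_dvd (by simpa [parity_simps, iff_comm] using hs)
  obtain rfl : s = r ^ 2 - 2 * t := by linarith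
  have hcop : IsCoprime (r ^ 2 + 2 * k ^ 2) k := by
    simpa only [sq k, mul_left_comm 2 k k] using
      (h.isCoprime.of_mul_right_right.pow_left (m := 2)).add_mul_left_left (2 * k)
  -- With `e = 2k`, the two factors below are `(2r² + e² ∓ 2s) / 4`.
  obtain ⟨a, b, hab, hab_sq, hsum⟩ := exists_eq_pow_add_mul_pow_of_even (p := 5) (n := 4)
    (a := t + k ^ 2) (b := t + k ^ 2 + (r ^ 2 - 2 * t))
    (by norm_num) (by norm_num) (by norm_num) (by decide) (by ring)
    (by linarith [h.sq_eq]) (by positivity) hcop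
  exact ⟨a, b, hab, by linear_combination -4 * hab_sq, by linear_combination hsum + 2 * hab_sq⟩

theorem exists_half_of_odd (h : IsPrimitiveCoveringPoint r e s) (he : Odd e) :
    ∃ u v a : ℤ, IsPrimitiveCoveringPoint u v a ∧ e ^ 2 = (a * u * v) ^ 2 ∧
      2 * |r| = u ^ 4 + v ^ 4 := by
  obtain ⟨a, b, hab, he_sq, hr⟩ := h.exists_four_mul_sq_eq_of_odd he
  obtain ⟨ha_odd, hb_odd⟩ : Odd a ∧ Odd b := by
    have : Odd ((a * b) ^ 2) := he_sq ▸ he.pow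
    exact Int.odd_mul.mp ((Int.odd_pow' two_ne_zero).mp this)
  obtain ⟨y, hy⟩ : ∃ y, a ^ 2 - b ^ 2 = 2 * y := (ha_odd.pow.sub_odd hb_odd.pow).two_dvd
  have hcop : IsCoprime (b ^ 2) y := by
    have : IsCoprime (b ^ 2) (2 * y) := by
      rw [← hy]
      simpa [sub_eq_add_neg] using (hab.symm.pow (m := 2) (n := 2)).add_mul_left_right (-1)
    exact this.of_mul_right_right
  have htriple : PythagoreanTriple (b ^ 2) y |r| := by
    rw [hy] at hr
    rw [PythagoreanTriple, abs_mul_abs_self]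
    linarith
  obtain ⟨u, v, huv, hb, hy', hr'⟩ := exists_pow_four_sub_pow_four_of_pythagoreanTriple_sq
    htriple hcop hb_odd (abs_pos.mpr h.left_ne_zero)
  refine ⟨u, v, a, ⟨huv, by linear_combination hy + hy' - hb⟩, ?_, hr'⟩
  linear_combination he_sq - a ^ 2 * hb

theorem exists_half_of_even (h : IsPrimitiveCoveringPoint r e s) (he : Even e) (he0 : e ≠ 0) :
    ∃ u v a : ℤ, IsPrimitiveCoveringPoint u v a ∧ e ^ 2 = (2 * a * u * v) ^ 2 ∧ Odd (u + v) := by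
  obtain ⟨a, b, hab, he_sq, hr⟩ := h.exists_sq_eq_of_even he
  have hb0 : b ≠ 0 := by rintro rfl; simp [he0] at he_sq
  have hr_odd : Odd (r ^ 2) :=
    (Int.isCoprime_two_right.mp (h.isCoprime.of_isCoprime_of_dvd_right he.two_dvd)).pow
  have hcop : IsCoprime (a ^ 2 - b ^ 2) (2 * b ^ 2) := by
    refine .mul_right (Int.isCoprime_two_right.mpr ?_) ?_
    · rw [hr] at hr_odd
      simpa [parity_simps] using hr_odd
    · simpa [sub_eq_add_neg] using (hab.pow (m := 2) (n := 2)).add_mul_left_left (-1)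
  have htriple : PythagoreanTriple (a ^ 2 - b ^ 2) (2 * b ^ 2) |r| := by
    rw [PythagoreanTriple, abs_mul_abs_self]
    linear_combination -hr
  obtain ⟨u, v, huv, huv_odd, hb, ha⟩ :=
    exists_pow_four_sub_pow_four_of_pythagoreanTriple_two_mul_sq htriple hcop hb0
      (abs_pos.mpr h.left_ne_zero)
  refine ⟨u, v, a, ⟨huv, by linear_combination ha - hb⟩, ?_, huv_odd⟩
  linear_combination he_sq - 4 * a ^ 2 * hb

theorem right_sq_eq_one (h : IsPrimitiveCoveringPoint r e s) (he0 : e ≠ 0) (hr : r ^ 2 = 1)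
    (hs : s ^ 2 = 1) : e ^ 2 = 1 := by
  refine mul_left_cancel₀ (pow_ne_zero 2 he0) ?_
  linear_combination h.sq_eq - hs + (r ^ 2 + 1 + e ^ 2) * hr

theorem sq_eq_one (h : IsPrimitiveCoveringPoint r e s) (he0 : e ≠ 0) : r ^ 2 = 1 ∧ e ^ 2 = 1 := by
  induction hn : e.natAbs using Nat.strong_induction_on generalizing r e s with
  | _ n ih =>
    subst hn
    rcases Int.even_or_odd e with he | he
    · obtain ⟨u, v, a, huv, he_sq, hodd⟩ := h.exists_half_of_even he he0
      have hv0 : v ≠ 0 := by rintro rfl; simp [he0] at he_sq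
      have hlt : v.natAbs < e.natAbs := by
        refine (natAbs_lt_natAbs_or_isUnit he0 he_sq).resolve_right fun hunit ↦ ?_
        rw [mul_assoc, IsUnit.mul_iff] at hunit
        exact Int.prime_two.not_isUnit hunit.1
      obtain ⟨hu, hv⟩ := ih _ hlt huv hv0 rfl
      have hodd_sq : Odd (u ^ 2 + v ^ 2) := by simpa [parity_simps] using hodd
      rw [hu, hv] at hodd_sq
      exact absurd hodd_sq (by decide)
    · obtain ⟨u, v, a, huv, he_sq, hr⟩ := h.exists_half_of_odd he
      have hv0 : v ≠ 0 := by rintro rfl; simp [he0] at he_sq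
      obtain ⟨hu, hv⟩ : u ^ 2 = 1 ∧ v ^ 2 = 1 := by
        rcases natAbs_lt_natAbs_or_isUnit he0 he_sq with hlt | hunit
        · exact ih _ hlt huv hv0 rfl
        · obtain ⟨ha, hu⟩ := IsUnit.mul_iff.mp hunit
          exact ⟨Int.isUnit_sq hu, huv.right_sq_eq_one hv0 (Int.isUnit_sq hu) (Int.isUnit_sq ha)⟩
      have ha : a ^ 2 = 1 := by
        rw [huv.sq_eq]; linear_combination (u ^ 2 + 1 + v ^ 2) * hu - v ^ 2 * hv
      have hr_abs : |r| = 1 := by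
        have : 2 * |r| = 2 := by linear_combination hr + (u ^ 2 + 1) * hu + (v ^ 2 + 1) * hv
        linarith
      refine ⟨by rw [← sq_abs, hr_abs, one_pow], ?_⟩
      rw [he_sq, mul_pow, mul_pow, ha, hu, hv]; norm_num

end IsPrimitiveCoveringPoint

theorem exists_eq_div_sq_of_sq_eq_cubic {α β γ : ℤ} {z w : ℚ}
    (h : w ^ 2 = z ^ 3 + α * z ^ 2 + β * z + γ) :
    ∃ m e N : ℤ, IsCoprime m e ∧ e ≠ 0 ∧ z = m / e ^ 2 ∧
      N ^ 2 = m ^ 3 + α * m ^ 2 * e ^ 2 + β * m * e ^ 4 + γ * e ^ 6 := by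
  obtain ⟨m, hm⟩ : ∃ m, z.num = m := ⟨_, rfl⟩
  obtain ⟨d, hd⟩ : ∃ d : ℤ, z.den = d := ⟨_, rfl⟩
  have hcop : IsCoprime m d := hm ▸ hd ▸ z.isCoprime_num_den
  have hd_pos : 0 < d := hd ▸ mod_cast z.den_pos
  have hz : z = m / d := by rw [← hm, ← hd]; exact_mod_cast z.num_div_den.symm
  set c := m ^ 3 + α * m ^ 2 * d + β * m * d ^ 2 + γ * d ^ 3 with hc
  have hdc : IsCoprime d c := by
    rw [show c = m ^ 3 + d * (α * m ^ 2 + β * m * d + γ * d ^ 2) by rw [hc]; ring]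
    exact hcop.symm.pow_right.add_mul_left_right _
  obtain ⟨N, hN⟩ : IsSquare (d * c) := by
    rw [← Rat.isSquare_intCast_iff]
    refine ⟨w * d ^ 2, ?_⟩
    have : (d : ℚ) ≠ 0 := mod_cast hd_pos.ne'
    rw [mul_mul_mul_comm, ← sq w, h, hz, hc]
    push_cast
    field_simp
  rw [← sq] at hN
  obtain ⟨e, M, -, rfl, hM⟩ := exists_eq_pow_and_eq_pow_of_mul_eq_pow two_ne_zero hdc hd_pos.le
    (nonneg_of_mul_nonneg_right (hN ▸ sq_nonneg N) hd_pos) hN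
  exact ⟨m, e, M, (IsCoprime.pow_right_iff two_pos).mp hcop, by rintro rfl; simp at hd_pos,
    by rw [hz]; push_cast; rfl, by rw [← hM, hc]; ring⟩

theorem eq_zero_or_one_or_neg_one_of_sq_eq {z w : ℚ} (h : w ^ 2 = z * (z ^ 2 + z - 1)) :
    z = 0 ∨ z = 1 ∨ z = -1 := by
  obtain ⟨m, e, N, hme, he0, rfl, hN⟩ := exists_eq_div_sq_of_sq_eq_cubic (α := 1) (β := -1) (γ := 0)
    (z := z) (w := w) (by rw [h]; push_cast; ring)
  rcases eq_or_ne m 0 with rfl | hm0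
  · left; simp
  right
  set c := m ^ 2 + m * e ^ 2 - e ^ 4 with hc
  have hmc : IsCoprime m c := by
    rw [show c = -e ^ 4 + m * (m + e ^ 2) by rw [hc]; ring]
    exact hme.pow_right.neg_right.add_mul_left_right _
  have hmul : m * c = N ^ 2 := by rw [hN]; ring
  rcases mul_nonneg_iff.mp (hmul ▸ sq_nonneg N) with ⟨hm_sign, hc_sign⟩ | ⟨hm_sign, hc_sign⟩
  · obtain ⟨r, s, -, rfl, hs⟩ :=
      exists_eq_pow_and_eq_pow_of_mul_eq_pow two_ne_zero hmc hm_sign hc_sign hmul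
    have hpt : IsPrimitiveCoveringPoint r e s :=
      ⟨(IsCoprime.pow_left_iff two_pos).mp hme, by rw [← hs, hc]; ring⟩
    obtain ⟨hr1, he1⟩ := hpt.sq_eq_one he0
    left
    norm_cast; simp [hr1, he1]
  · obtain ⟨r, s, -, hr, hs⟩ := exists_eq_pow_and_eq_pow_of_mul_eq_pow two_ne_zero hmc.neg_neg
      (neg_nonneg.mpr hm_sign) (neg_nonneg.mpr hc_sign) ((neg_mul_neg m c).trans hmul)
    obtain rfl : m = -r ^ 2 := by linarith
    have hpt : IsPrimitiveCoveringPoint e r s :=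
      ⟨((IsCoprime.pow_left_iff two_pos).mp ((IsCoprime.neg_left_iff _ _).mp hme)).symm,
        by rw [← hs, hc]; ring⟩
    obtain ⟨he1, hr1⟩ := hpt.sq_eq_one (by rintro rfl; simp at hm0)
    right
    norm_cast; simp [hr1, he1]

theorem eq_zero_or_one_or_two_of_sq_eq {q y : ℚ} (h : y ^ 2 = q * (q - 2) * (q ^ 2 + 2 * q - 4)) :
    q = 0 ∨ q = 1 ∨ q = 2 := by
  rcases eq_or_ne q 0 with hq | hq
  · exact .inl hq
  have hE : (y / q ^ 2) ^ 2 = (2 / q - 1) * ((2 / q - 1) ^ 2 + (2 / q - 1) - 1) := by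
    rw [div_pow, h]; field_simp; ring
  right
  rcases eq_zero_or_one_or_neg_one_of_sq_eq hE with hz | hz | hz <;> field_simp at hz
  · right; linarith
  · left; linarith
  · linarith

theorem sq_add_self_ne_one (x : ℚ) : x ^ 2 + x ≠ 1 := by
  intro h
  have h5 : IsSquare (5 : ℚ) := ⟨2 * x + 1, by linear_combination -4 * h⟩
  exact Nat.prime_five.prime.not_isSquare (Rat.isSquare_ofNat_iff.mp h5)

/-- Subsection 6.1: the affine rational points of
`y² = x⁸ + 4x⁷ + 6x⁶ + 4x⁵ - 7x⁴ - 16x³ + 8x` are exactly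
`(-2, 0), (-1, 0), (0, 0), (1, 0)`. -/
theorem stmt_11 :
    ∀ x y : ℚ,
      y ^ 2 = x ^ 8 + 4 * x ^ 7 + 6 * x ^ 6 + 4 * x ^ 5 - 7 * x ^ 4
          - 16 * x ^ 3 + 8 * x ↔
        (x = -2 ∧ y = 0) ∨ (x = -1 ∧ y = 0) ∨ (x = 0 ∧ y = 0) ∨
        (x = 1 ∧ y = 0) := by
  intro x y
  constructor
  · intro h
    have hq : y ^ 2 = (x ^ 2 + x) * (x ^ 2 + x - 2) * ((x ^ 2 + x) ^ 2 + 2 * (x ^ 2 + x) - 4) := by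
      rw [h]; ring
    have hx : (x + 2) * (x + 1) * x * (x - 1) = 0 := by
      rcases eq_zero_or_one_or_two_of_sq_eq hq with h0 | h1 | h2
      · linear_combination (x ^ 2 + x - 2) * h0
      · exact absurd h1 (sq_add_self_ne_one x)
      · linear_combination (x ^ 2 + x) * h2
    have hy : y = 0 := by
      refine pow_eq_zero_iff two_ne_zero |>.mp ?_
      linear_combination hq + ((x ^ 2 + x) ^ 2 + 2 * (x ^ 2 + x) - 4) * hx
    simp only [mul_eq_zero, add_eq_zero_iff_eq_neg, sub_eq_zero] at hx
    tauto
  · rintro (⟨rfl, rfl⟩ | ⟨rfl, rfl⟩ | ⟨rfl, rfl⟩ | ⟨rfl, rfl⟩) <;> norm_num
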